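/- Let S₁ and S₂ be two disjoint finite sets of vectors in ℝ^d, let m, k be parameters with |S₁|, |S₂| ≤ m, and assume that S₁ ∪ S₂ is (λ, m, k/2)-balanced. If |S₁|·|S₂| ≤ k and ⟨Sum(S₁), Sum(S₂)⟩ ≥ √(θ·|S₁|·|S₂|·d) for some parameter 0 < θ ≤ λ, then there is a subset S₂′ ⊆ S₂ with |S₂′| ≥ θ·|S₂|/(8λ) such that every v ∈ S₂′ satisfies ⟨v, Sum(S₁)⟩ ≥ (1/4)·√(θ·|S₁|·d/|S₂|). -/

import Mathlib

/-!
Put `X = √(θ |S₁| |S₂| d)`, so that `⟨v, Sum(S₁)⟩` is at least `X / |S₂| = √(θ |S₁| d / |S₂|)` on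
average over `v ∈ S₂`, and let `S₂'` consist of the `v` where it is at least `α X / |S₂|`. Suppose
`|S₂'| < β θ |S₂| / λ` with `β ≤ 1`. Then `S₂'` is not all of `S₂`, and the vectors outside `S₂'`
contribute less than `α X` to `⟨Sum(S₁), Sum(S₂)⟩ ≥ X`. By balancedness of `S₁ ∪ S₂`, those in `S₂'`
contribute at most `√(λ |S₁| |S₂'| d) ≤ √β X`. This is a contradiction if `α + √β ≤ 1`, for instance
if `α = 1/4` and `β = 1/8`.
-/

open scoped Classical RealInnerProductSpace

/-- The sum of a finite set of vectors in `ℝ^d`. -/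
noncomputable def SumV {d : ℕ} (T : Finset (EuclideanSpace ℝ (Fin d))) :
    EuclideanSpace ℝ (Fin d) := ∑ v ∈ T, v

/-- A finite set `S` of vectors in `ℝ^d` is `(λ, m, k)`-balanced if for all pairs of disjoint
subsets `S₁, S₂ ⊆ S` with `|S₁|, |S₂| ≤ m` and `|S₁|·|S₂| ≤ k`, one has
`|⟨Sum(S₁), Sum(S₂)⟩| ≤ √(λ·|S₁|·|S₂|·d)`. -/
def IsBalanced {d : ℕ} (S : Finset (EuclideanSpace ℝ (Fin d))) (lam m k : ℝ) : Prop :=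
  ∀ S₁ S₂ : Finset (EuclideanSpace ℝ (Fin d)), S₁ ⊆ S → S₂ ⊆ S → Disjoint S₁ S₂ →
    (S₁.card : ℝ) ≤ m → (S₂.card : ℝ) ≤ m → (S₁.card : ℝ) * (S₂.card : ℝ) ≤ k →
    |⟪SumV S₁, SumV S₂⟫| ≤ Real.sqrt (lam * S₁.card * S₂.card * d)

lemma sum_lt_sum_filter_le_add_card_nsmul {ι M : Type*} [AddCommMonoid M] [LinearOrder M]
    [IsOrderedCancelAddMonoid M] {s : Finset ι} {f : ι → M} {c : M} (hc : 0 ≤ c)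
    (hs : {i ∈ s | c ≤ f i} ≠ s) :
    ∑ i ∈ s, f i < ∑ i ∈ s with c ≤ f i, f i + s.card • c := by
  rw [← Finset.sum_filter_add_sum_filter_not s (c ≤ f ·), add_lt_add_iff_left]
  have hne : {i ∈ s | ¬ c ≤ f i}.Nonempty := by
    simpa only [ne_eq, Finset.filter_eq_self, not_forall, exists_prop,
      ← Finset.filter_nonempty_iff] using hs
  calc ∑ i ∈ s with ¬ c ≤ f i, f i
      < ∑ i ∈ s with ¬ c ≤ f i, c :=
        Finset.sum_lt_sum_of_nonempty hne fun i hi ↦ not_le.mp (Finset.mem_filter.mp hi).2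
    _ = {i ∈ s | ¬ c ≤ f i}.card • c := Finset.sum_const c
    _ ≤ s.card • c := nsmul_le_nsmul_left hc (Finset.card_filter_le _ _)

lemma mul_sqrt_div_self (x : ℝ) {n : ℝ} (hn : 0 ≤ n) : n * √(x / n) = √(x * n) := by
  rw [Real.sqrt_div' x hn, Real.sqrt_mul' x hn, mul_div_left_comm, Real.div_sqrt]

lemma mul_card_le_card_filter_of_sqrt_le_sum {ι : Type*} {s : Finset ι} {f : ι → ℝ}
    {A lam θ α β : ℝ} (hA : 0 ≤ A) (hθ0 : 0 < θ) (hθ : θ ≤ lam) (hα : 0 ≤ α) (hβ : 0 ≤ β)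
    (hαβ : α + √β ≤ 1) (hsum : √(θ * A * s.card) ≤ ∑ i ∈ s, f i)
    (hsmall : ∀ t ⊆ s, (t.card : ℝ) ≤ β * s.card → ∑ i ∈ t, f i ≤ √(lam * A * t.card)) :
    β * (θ * s.card / lam) ≤ ({i ∈ s | α * √(θ * A / s.card) ≤ f i}.card : ℝ) := by
  have hlam : 0 < lam := hθ0.trans_le hθ
  set c := α * √(θ * A / s.card) with hc
  set X := √(θ * A * s.card)
  set t := {i ∈ s | c ≤ f i}
  by_contra! hfew
  have hβ1 : β ≤ 1 := Real.sqrt_le_one.mp (by linarith)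
  have hlam_t : lam * t.card ≤ β * (θ * s.card) := by
    rw [← mul_div_assoc, lt_div_iff₀' hlam] at hfew
    exact hfew.le
  have ht_lt : (t.card : ℝ) < β * s.card := by
    refine hfew.trans_le (mul_le_mul_of_nonneg_left ?_ hβ)
    rw [div_le_iff₀' hlam]
    gcongr
  have hts : t ≠ s := fun h ↦ by
    rw [h] at ht_lt
    exact ht_lt.not_ge (mul_le_of_le_one_left s.card.cast_nonneg hβ1)
  have hmany : ∑ i ∈ t, f i ≤ √β * X := calc
    ∑ i ∈ t, f i ≤ √(lam * A * t.card) := hsmall t (Finset.filter_subset _ _) ht_lt.le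
    _ ≤ √(β * (θ * A * s.card)) := Real.sqrt_le_sqrt (by
        linarith [mul_le_mul_of_nonneg_right hlam_t hA])
    _ = √β * X := Real.sqrt_mul hβ _
  have hthreshold : s.card • c = α * X := by
    rw [nsmul_eq_mul, hc, mul_left_comm, mul_sqrt_div_self _ s.card.cast_nonneg]
  have hlt : X < (√β + α) * X := calc
    X ≤ ∑ i ∈ s, f i := hsum
    _ < ∑ i ∈ t, f i + s.card • c := sum_lt_sum_filter_le_add_card_nsmul (by positivity) hts
    _ ≤ (√β + α) * X := by rw [hthreshold, add_mul]; gcongr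
  exact hlt.not_ge (mul_le_of_le_one_left (Real.sqrt_nonneg _) (by linarith))

lemma real_inner_sumV {d : ℕ} (x : EuclideanSpace ℝ (Fin d))
    (T : Finset (EuclideanSpace ℝ (Fin d))) : ⟪x, SumV T⟫ = ∑ v ∈ T, ⟪v, x⟫ := by
  rw [real_inner_comm, SumV, sum_inner]

lemma IsBalanced.sum_inner_le {d : ℕ} {S₁ S₂ T : Finset (EuclideanSpace ℝ (Fin d))}
    {lam m k : ℝ} (hbal : IsBalanced (S₁ ∪ S₂) lam m k) (hdisj : Disjoint S₁ S₂) (hT : T ⊆ S₂)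
    (hm₁ : (S₁.card : ℝ) ≤ m) (hmT : (T.card : ℝ) ≤ m) (hk : (S₁.card : ℝ) * T.card ≤ k) :
    ∑ v ∈ T, ⟪v, SumV S₁⟫ ≤ √(lam * (S₁.card * d) * T.card) := by
  rw [← real_inner_sumV, ← mul_assoc, mul_right_comm]
  exact (le_abs_self _).trans <| hbal S₁ T Finset.subset_union_left
    (hT.trans Finset.subset_union_right) (hdisj.mono_right hT) hm₁ hmT hk

theorem inner_product_uniformity_general {d : ℕ}
    {S₁ S₂ : Finset (EuclideanSpace ℝ (Fin d))} (hdisj : Disjoint S₁ S₂)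
    {lam m k θ α β : ℝ} (hm₁ : (S₁.card : ℝ) ≤ m) (hm₂ : (S₂.card : ℝ) ≤ m)
    (hbal : IsBalanced (S₁ ∪ S₂) lam m k) (hk : β * (S₁.card * S₂.card) ≤ k)
    (hθ0 : 0 < θ) (hθ : θ ≤ lam) (hα : 0 ≤ α) (hβ : 0 ≤ β) (hαβ : α + √β ≤ 1)
    (hip : √(θ * S₁.card * S₂.card * d) ≤ ⟪SumV S₁, SumV S₂⟫) :
    ∃ S₂' ⊆ S₂, β * (θ * S₂.card / lam) ≤ S₂'.card ∧
      ∀ v ∈ S₂', α * √(θ * S₁.card * d / S₂.card) ≤ ⟪v, SumV S₁⟫ := by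
  rw [real_inner_sumV, mul_right_comm, mul_assoc θ] at hip
  simp only [mul_assoc θ]
  refine ⟨_, Finset.filter_subset _ _, mul_card_le_card_filter_of_sqrt_le_sum (by positivity)
    hθ0 hθ hα hβ hαβ hip fun T hT hTcard ↦ hbal.sum_inner_le hdisj hT hm₁ ?_ ?_,
    fun v hv ↦ (Finset.mem_filter.mp hv).2⟩
  · exact (Nat.cast_le.mpr (Finset.card_le_card hT)).trans hm₂
  · calc (S₁.card : ℝ) * T.card ≤ S₁.card * (β * S₂.card) := by gcongr
      _ = β * (S₁.card * S₂.card) := mul_left_comm _ _ _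
      _ ≤ k := hk

/-- If `S₁, S₂` are disjoint, `|S₁|, |S₂| ≤ m`, `S₁ ∪ S₂` is
`(λ, m, k/2)`-balanced, `|S₁|·|S₂| ≤ k` and `⟨Sum(S₁), Sum(S₂)⟩ ≥ √(θ|S₁||S₂|d)` for some
`0 < θ ≤ λ`, then there is `S₂′ ⊆ S₂` with `|S₂′| ≥ θ|S₂|/(8λ)` such that every `v ∈ S₂′`
satisfies `⟨v, Sum(S₁)⟩ ≥ (1/4)·√(θ|S₁|d/|S₂|)`. -/
theorem inner_product_uniformity {d : ℕ}
    (S₁ S₂ : Finset (EuclideanSpace ℝ (Fin d))) (hdisj : Disjoint S₁ S₂)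
    (lam m k θ : ℝ) (h1m : (S₁.card : ℝ) ≤ m) (h2m : (S₂.card : ℝ) ≤ m)
    (hbal : IsBalanced (S₁ ∪ S₂) lam m (k / 2))
    (hk : (S₁.card : ℝ) * S₂.card ≤ k)
    (hθ0 : 0 < θ) (hθ : θ ≤ lam)
    (hip : ⟪SumV S₁, SumV S₂⟫ ≥ Real.sqrt (θ * S₁.card * S₂.card * d)) :
    ∃ S₂' ⊆ S₂, θ * S₂.card / (8 * lam) ≤ (S₂'.card : ℝ) ∧
      ∀ v ∈ S₂', ⟪v, SumV S₁⟫ ≥ (1 / 4) * Real.sqrt (θ * S₁.card * d / S₂.card) := by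
  have hk8 : (1 / 8 : ℝ) * (S₁.card * S₂.card) ≤ k / 2 := by
    have : (0 : ℝ) ≤ S₁.card * S₂.card := by positivity
    linarith
  have hconst : 1 / 4 + √(1 / 8 : ℝ) ≤ 1 := by
    have : √(1 / 8 : ℝ) ≤ 3 / 4 := Real.sqrt_le_iff.mpr (by norm_num)
    linarith
  obtain ⟨S₂', hsub, hcard, hinner⟩ := inner_product_uniformity_general hdisj h1m h2m hbal hk8
    hθ0 hθ (by norm_num) (by norm_num) hconst hip
  exact ⟨S₂', hsub, by convert hcard using 1; ring, hinner⟩
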